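/- Let (L,[-,-,-]) be a ternary Leibniz algebra over a field K, (V,λ,μ,ρ) a representation of L on V, and (N,T) a Nijenhuis pair, i.e. N : L → L is a Nijenhuis operator on L and T : V → V is a linear map satisfying, for all x,y ∈ L: λ(N(x),N(y))∘T = T∘(λ(N(x),N(y)) + λ(N(x),y)∘T + λ(x,N(y))∘T) − T²∘(λ(x,y)∘T + λ(N(x),y) + λ(x,N(y))) + T³∘λ(x,y), and the analogous identities with λ replaced by μ and by ρ. Then the linear map N ⊕ T : L ⊕ V → L ⊕ V, (x,u) ↦ (N(x),T(u)), is a Nijenhuis operator on the semidirect-product ternary Leibniz algebra L ⊕ V whose bracket is [x+u₁, y+u₂, z+u₃] := [x,y,z] + ρ(y,z)(u₁) + μ(x,z)(u₂) + λ(x,y)(u₃). -/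

import Mathlib

variable {K : Type*} [Field K] {L : Type*} [AddCommGroup L] [Module K L]
variable {V : Type*} [AddCommGroup V] [Module K V]

/-- The (right) ternary Leibniz identity for a ternary bracket. -/
def TernaryLeibnizId {A : Type*} [AddCommGroup A] (b : A → A → A → A) : Prop :=
  ∀ x y z t u : A,
    b (b x y z) t u = b x y (b z t u) + b x (b y t u) z + b (b x t u) y z

/-- A Nijenhuis operator on a ternary Leibniz algebra. -/
def IsTernaryNijenhuis {A : Type*} [AddCommGroup A] (t : A → A → A → A) (N : A → A) : Prop :=
  ∀ x y z : A,
    t (N x) (N y) (N z) =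
      N (t (N x) (N y) z + t (N x) y (N z) + t x (N y) (N z)) -
        N (N (t (N x) y z + t x (N y) z + t x y (N z))) +
        N (N (N (t x y z)))

/-- A representation `(V, λ, μ, ρ)` of a ternary Leibniz algebra `(L, t)` on `V`. -/
def IsTernaryRep (t : L → L → L → L)
    (lam mu rho : L → L → Module.End K V) : Prop :=
  (∀ x y z w : L,
    lam (t x y z) w = lam x y * lam z w + mu x z * lam y w + rho y z * lam x w) ∧
  (∀ x y z w : L,
    mu (t x y z) w = lam x y * mu z w + mu x z * mu y w + rho y z * mu x w) ∧
  (∀ x y z w : L,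
    rho z w * lam x y = lam x y * rho z w + lam x (t y z w) + lam (t x z w) y) ∧
  (∀ x y z w : L,
    rho z w * mu x y = mu x (t y z w) + mu x y * rho z w + mu (t x z w) y) ∧
  (∀ x y z w : L,
    rho z w * rho x y = rho x (t y z w) + rho (t x z w) y + rho x y * rho z w)

section Semidirect

variable {R A M : Type*} [Semiring R] [AddCommGroup M] [Module R M]

/-- The identity that a Nijenhuis pair `(N, T)` imposes on each of the three actions `λ, μ, ρ`:
compatibility of the binary family of operators `φ` with `N` on the parameters and `T` on `M`. -/
def IsNijenhuisAction (φ : A → A → Module.End R M) (N : A → A)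
    (T : Module.End R M) : Prop :=
  ∀ x y : A,
    φ (N x) (N y) * T =
      T * (φ (N x) (N y) + φ (N x) y * T + φ x (N y) * T) -
        T ^ 2 * (φ x y * T + φ (N x) y + φ x (N y)) + T ^ 3 * φ x y

theorem IsNijenhuisAction.apply {φ : A → A → Module.End R M} {N : A → A}
    {T : Module.End R M} (h : IsNijenhuisAction φ N T) (x y : A) (u : M) :
    φ (N x) (N y) (T u) =
      T (φ (N x) (N y) u + φ (N x) y (T u) + φ x (N y) (T u)) -
        T (T (φ (N x) y u + φ x (N y) u + φ x y (T u))) +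
        T (T (T (φ x y u))) := by
  have h_at_u := LinearMap.congr_fun (h x y) u
  simp only [pow_succ, pow_zero, one_mul, Module.End.mul_apply, LinearMap.add_apply,
    LinearMap.sub_apply] at h_at_u
  rw [h_at_u, add_rotate (φ x y (T u))]

/-- The bracket of the semidirect product `A ⊕ M`, encoded on `A × M`: `rho`, `mu` and `lam` act on
the `M`-component of the first, second and third argument respectively. -/
def semidirectBracket (t : A → A → A → A) (lam mu rho : A → A → Module.End R M)
    (p q r : A × M) : A × M :=
  (t p.1 q.1 r.1, rho q.1 r.1 p.2 + mu p.1 r.1 q.2 + lam p.1 q.1 r.2)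

variable [AddCommGroup A]

/-- A Nijenhuis pair `(N, T)`: a Nijenhuis operator `N` for `t` together with an operator `T` on
the module that is compatible with `N` through all three actions. -/
structure IsNijenhuisPair (t : A → A → A → A) (lam mu rho : A → A → Module.End R M)
    (N : A → A) (T : Module.End R M) : Prop where
  isTernaryNijenhuis : IsTernaryNijenhuis t N
  lam_action : IsNijenhuisAction lam N T
  mu_action : IsNijenhuisAction mu N T
  rho_action : IsNijenhuisAction rho N T

theorem nijenhuis_pair_semidirect_general {t : A → A → A → A}
    {lam mu rho : A → A → Module.End R M} {N : A → A} {T : Module.End R M}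
    (h : IsNijenhuisPair t lam mu rho N T) :
    IsTernaryNijenhuis (semidirectBracket t lam mu rho) (Prod.map N T) := by
  rintro ⟨x, u⟩ ⟨y, v⟩ ⟨z, w⟩
  refine Prod.ext (h.isTernaryNijenhuis x y z) ?_
  -- The `M`-component is additive in `(u, v, w)`, so it is the sum of the three action identities.
  simp only [semidirectBracket, Prod.map_apply, Prod.snd_add, Prod.snd_sub, Prod.map_snd]
  rw [h.rho_action.apply y z u, h.mu_action.apply x z v, h.lam_action.apply x y w]
  simp only [map_add]
  abel

end Semidirect

/-- If `(N, T)` is a Nijenhuis pair on a ternary Leibniz algebra `(L, [-,-,-])` with a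
representation `(V, λ, μ, ρ)`, then `N ⊕ T` is a Nijenhuis operator on the semidirect-product
ternary Leibniz algebra `L ⊕ V`. -/
theorem nijenhuis_pair_semidirect (t : L →ₗ[K] L →ₗ[K] L →ₗ[K] L)
    (ht : TernaryLeibnizId fun x y z => t x y z)
    (lam mu rho : L →ₗ[K] L →ₗ[K] Module.End K V)
    (hrep : IsTernaryRep (fun x y z => t x y z)
      (fun x y => lam x y) (fun x y => mu x y) (fun x y => rho x y))
    (N : L →ₗ[K] L) (T : Module.End K V)
    (hN : IsTernaryNijenhuis (fun x y z => t x y z) (fun x => N x))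
    (hTlam : ∀ x y : L,
      lam (N x) (N y) * T =
        T * (lam (N x) (N y) + lam (N x) y * T + lam x (N y) * T) -
          T ^ 2 * (lam x y * T + lam (N x) y + lam x (N y)) + T ^ 3 * lam x y)
    (hTmu : ∀ x y : L,
      mu (N x) (N y) * T =
        T * (mu (N x) (N y) + mu (N x) y * T + mu x (N y) * T) -
          T ^ 2 * (mu x y * T + mu (N x) y + mu x (N y)) + T ^ 3 * mu x y)
    (hTrho : ∀ x y : L,
      rho (N x) (N y) * T =
        T * (rho (N x) (N y) + rho (N x) y * T + rho x (N y) * T) -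
          T ^ 2 * (rho x y * T + rho (N x) y + rho x (N y)) + T ^ 3 * rho x y) :
    IsTernaryNijenhuis
      (fun p q r : L × V =>
        (t p.1 q.1 r.1, rho q.1 r.1 p.2 + mu p.1 r.1 q.2 + lam p.1 q.1 r.2))
      (fun p : L × V => (N p.1, T p.2)) := by
  have h_pair : IsNijenhuisPair (fun x y z => t x y z) (fun x y => lam x y) (fun x y => mu x y)
      (fun x y => rho x y) N T :=
    ⟨hN, hTlam, hTmu, hTrho⟩
  exact nijenhuis_pair_semidirect_general h_pair
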